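/- arXiv:2407.12509 — 3 statements merged into one kernel-verified Lean document; each statement's English description precedes it below -/
import Mathlib

section
/- (Theorem 1, consequences.) Let the data (u_{[0,t−1]}, y_{[0,t−1]}) with u_{[0,t−1]} ≠ 0 be generated by a minimal true system with n_true states and lag ℓ_true, and let L, N satisfy ℓ_true ≤ L and n_true ≤ N. If t ≥ L_t^a + (L_t^a + 1)m + n_min,t and rank H_{L_t^a,t} = (L_t^a + 1)m + n_min,t, where L_t^a := min(L, N − n_min,t + ℓ_min,t), then ℓ_true = ℓ_min,t, n_true = n_min,t, and ℰ_t ∩ M ∩ S_{L,N} = ℰ_t(n_min,t). -/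
/-!
Write `n = n_min,t`, `ℓ = ℓ_min,t`, `K = min (L, N - n + ℓ)`, and let `S₀` be any explaining system
with `n` states.

Every explaining system `S` has the columns of `H_{K,t}` among its length `K+1` input/output
windows. Since the windows of `S₀` form a space of dimension at most `(K+1)m + n = rank H_{K,t}`,
they are exactly the column span, so *every window of `S₀` is a window of every explaining system*
(`window_transfer`), and a window of `S₀` determines its initial state
(`unobs_eq_bot_of_rank`). With zero input this compares the observability matrices:

* an explaining system of lag at most `K` has lag at least `lag S₀` (`lag_le_of_transfer`), so
  `lag S₀ = ℓ`;
* `rank Ω_{ℓ-1}(S) ≥ rank Ω_{ℓ-1}(S₀) = n`, and the rank of `Ω` increases strictly up to the lag, so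
  `lag S - ℓ ≤ n_S - n` (`lag_add_le`). Hence an explaining system in `S_{L,N}` has lag at most `K`.

If moreover `S` is observable with lag at most `K`, its state is determined by `K` outputs, so the
windows glue together and every trajectory of `S₀` is one of `S` (`trajectory_transfer`). A
trajectory starting with `K` zero samples forces the zero state in both systems, so the Markov
parameters agree (`markov_eq`). If `S` is minimal, the rank of the Hankel matrix
`(C A^(i+j) B)_{i,j}` is `n_S`, which gives `n_S ≤ n`, so `n_S = n`, and then `S₀` is minimal as well
(`states_eq_and_minimal`). Applying this to the true system and to arbitrary minimal
explaining systems proves the theorem.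
-/


open Matrix

/-- The Hankel matrix with `rows` block rows and `cols` columns built from the
vector sequence `f` (starting at time `0`): the block entry in block row `r` and
column `c` is `f (r + c)`.  Thus `H_k(f_{[0,t-1]}) = hankel f (k+1) (t-k)`. -/
def hankel {d : ℕ} (f : ℕ → Fin d → ℝ) (rows cols : ℕ) :
    Matrix (Fin rows × Fin d) (Fin cols) ℝ :=
  Matrix.of fun r c => f ((r.1 : ℕ) + (c : ℕ)) r.2

/-- `u_{[0,t-1]}` is persistently exciting of order `k+1`, i.e. the Hankel
matrix `H_k(u_{[0,t-1]})` (with `k+1` block rows) has full row rank. -/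
def PersistentlyExciting {m : ℕ} (u : ℕ → Fin m → ℝ) (t k : ℕ) : Prop :=
  (hankel u (k + 1) (t - k)).rank = (k + 1) * m

/-- The Hankel matrix `H_{k,t}`: `H_k(y_{[0,t-1]})` stacked on top of
`H_k(u_{[0,t-1]})`. -/
def Hkt {m p : ℕ} (u : ℕ → Fin m → ℝ) (y : ℕ → Fin p → ℝ) (k t : ℕ) :
    Matrix ((Fin (k + 1) × Fin p) ⊕ (Fin (k + 1) × Fin m)) (Fin (t - k)) ℝ :=
  Matrix.fromRows (hankel y (k + 1) (t - k)) (hankel u (k + 1) (t - k))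

/-- The matrix `G_{k,t}`: `H_{k-1}(y_{[0,t-2]})` (which has `k` block rows and
`t-k` columns) stacked on top of `H_k(u_{[0,t-1]})`. -/
def Gkt {m p : ℕ} (u : ℕ → Fin m → ℝ) (y : ℕ → Fin p → ℝ) (k t : ℕ) :
    Matrix ((Fin k × Fin p) ⊕ (Fin (k + 1) × Fin m)) (Fin (t - k)) ℝ :=
  Matrix.fromRows (hankel y k (t - k)) (hankel u (k + 1) (t - k))

/-- `δ_{k,t} = rank H_{k,t} - rank G_{k,t}`. -/
noncomputable def deltaKT {m p : ℕ} (u : ℕ → Fin m → ℝ) (y : ℕ → Fin p → ℝ) (k t : ℕ) : ℕ :=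
  (Hkt u y k t).rank - (Gkt u y k t).rank

/-- `q_t`: the smallest `k ∈ [0, t-1]` with `δ_{k,t} = 0`. -/
noncomputable def qT {m p : ℕ} (u : ℕ → Fin m → ℝ) (y : ℕ → Fin p → ℝ) (t : ℕ) : ℕ :=
  sInf {k | k ≤ t - 1 ∧ deltaKT u y k t = 0}

/-- A discrete-time linear system `(A, B, C, D)` with `m` inputs, `p` outputs
and `n` states. -/
structure LinSys (m p : ℕ) where
  n : ℕ
  A : Matrix (Fin n) (Fin n) ℝ
  B : Matrix (Fin n) (Fin m) ℝ
  C : Matrix (Fin p) (Fin n) ℝ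
  D : Matrix (Fin p) (Fin m) ℝ

/-- `obsMat sys k` is the observability matrix `Ω_{k-1}` with `k` block rows,
stacking `C, CA, ..., CA^(k-1)`. -/
def obsMat {m p : ℕ} (sys : LinSys m p) (k : ℕ) :
    Matrix (Fin k × Fin p) (Fin sys.n) ℝ :=
  Matrix.of fun r j => (sys.C * sys.A ^ (r.1 : ℕ)) r.2 j

/-- The lag `ℓ(C,A)`: the smallest `k ≥ 0` with `rank Ω_k = rank Ω_{k-1}`. -/
noncomputable def lag {m p : ℕ} (sys : LinSys m p) : ℕ :=
  sInf {k | (obsMat sys (k + 1)).rank = (obsMat sys k).rank}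

/-- The controllability matrix with `k` blocks `[B, AB, ..., A^(k-1)B]`. -/
def ctrlMat {m p : ℕ} (sys : LinSys m p) (k : ℕ) :
    Matrix (Fin sys.n) (Fin k × Fin m) ℝ :=
  Matrix.of fun i c => (sys.A ^ (c.1 : ℕ) * sys.B) i c.2

def Observable {m p : ℕ} (sys : LinSys m p) : Prop :=
  (obsMat sys sys.n).rank = sys.n

def Controllable {m p : ℕ} (sys : LinSys m p) : Prop :=
  (ctrlMat sys sys.n).rank = sys.n

def MinimalSys {m p : ℕ} (sys : LinSys m p) : Prop :=
  Controllable sys ∧ Observable sys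

/-- The system explains the data `(u_{[0,t-1]}, y_{[0,t-1]})` with the
compatible state sequence `x`. -/
def ExplainsWith {m p : ℕ} (sys : LinSys m p) (t : ℕ) (u : ℕ → Fin m → ℝ)
    (y : ℕ → Fin p → ℝ) (x : ℕ → Fin sys.n → ℝ) : Prop :=
  ∀ s < t, x (s + 1) = sys.A.mulVec (x s) + sys.B.mulVec (u s) ∧
    y s = sys.C.mulVec (x s) + sys.D.mulVec (u s)

/-- The system explains (equivalently, generates) the data
`(u_{[0,t-1]}, y_{[0,t-1]})`. -/
def Explains {m p : ℕ} (sys : LinSys m p) (t : ℕ) (u : ℕ → Fin m → ℝ)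
    (y : ℕ → Fin p → ℝ) : Prop :=
  ∃ x : ℕ → Fin sys.n → ℝ, ExplainsWith sys t u y x

/-- `ℰ_t`, the set of systems explaining the data. -/
def ExplSet {m p : ℕ} (t : ℕ) (u : ℕ → Fin m → ℝ) (y : ℕ → Fin p → ℝ) :
    Set (LinSys m p) :=
  {sys | Explains sys t u y}

/-- `ℓ_min,t`: the smallest lag among explaining systems. -/
noncomputable def lMin {m p : ℕ} (t : ℕ) (u : ℕ → Fin m → ℝ) (y : ℕ → Fin p → ℝ) : ℕ :=
  sInf {ℓ | ∃ sys : LinSys m p, Explains sys t u y ∧ lag sys = ℓ}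

/-- `n_min,t`: the smallest state dimension among explaining systems. -/
noncomputable def nMin {m p : ℕ} (t : ℕ) (u : ℕ → Fin m → ℝ) (y : ℕ → Fin p → ℝ) : ℕ :=
  sInf {n | ∃ sys : LinSys m p, Explains sys t u y ∧ sys.n = n}

/-- Two systems are isomorphic: `D₁ = D₂` and there is an invertible state
transformation `S` with `S A₁ = A₂ S`, `S B₁ = B₂`, `C₁ = C₂ S`. -/
def Isomorphic {m p : ℕ} (s1 s2 : LinSys m p) : Prop :=
  s1.D = s2.D ∧ ∃ (S : Matrix (Fin s2.n) (Fin s1.n) ℝ)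
    (S' : Matrix (Fin s1.n) (Fin s2.n) ℝ),
    S * S' = 1 ∧ S' * S = 1 ∧ S * s1.A = s2.A * S ∧ S * s1.B = s2.B ∧
    s1.C = s2.C * S

/-- `M`, the set of minimal systems. -/
def Mset (m p : ℕ) : Set (LinSys m p) := {sys | MinimalSys sys}

/-- `S_{L,N}`, the set of systems with lag at most `L` and at most `N` states. -/
def SLN (m p L N : ℕ) : Set (LinSys m p) := {sys | lag sys ≤ L ∧ sys.n ≤ N}

/-- The data `(u_{[0,t-1]}, y_{[0,t-1]})` are informative for system
identification (with prior bounds `L`, `N`, and true state dimension `nTrue`). -/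
def Informative {m p : ℕ} (t : ℕ) (u : ℕ → Fin m → ℝ) (y : ℕ → Fin p → ℝ)
    (nTrue L N : ℕ) : Prop :=
  (ExplSet t u y ∩ Mset m p ∩ SLN m p L N =
      {sys ∈ ExplSet t u y | sys.n = nTrue} ∩ Mset m p ∩ SLN m p L N) ∧
  ∀ s1 ∈ ExplSet t u y ∩ Mset m p ∩ SLN m p L N,
    ∀ s2 ∈ ExplSet t u y ∩ Mset m p ∩ SLN m p L N, Isomorphic s1 s2

/-! ### Unobservable subspaces and the lag -/

/-- The kernel of the observability matrix with `k` block rows. -/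
noncomputable def unobs {m p : ℕ} (S : LinSys m p) (k : ℕ) : Submodule ℝ (Fin S.n → ℝ) :=
  LinearMap.ker (obsMat S k).mulVecLin

lemma mem_unobs {m p : ℕ} (S : LinSys m p) (k : ℕ) (x : Fin S.n → ℝ) :
    x ∈ unobs S k ↔ ∀ i < k, S.C *ᵥ (S.A ^ i *ᵥ x) = 0 := by
  have key : ∀ (i : Fin k) (j : Fin p),
      (obsMat S k *ᵥ x) (i, j) = (S.C *ᵥ (S.A ^ (i : ℕ) *ᵥ x)) j := by
    intro i j
    rw [Matrix.mulVec_mulVec]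
    rfl
  rw [unobs, LinearMap.mem_ker, Matrix.mulVecLin_apply]
  constructor
  · intro h i hi
    ext j
    have := congrFun h (⟨i, hi⟩, j)
    rw [key] at this
    simpa using this
  · intro h
    ext ⟨i, j⟩
    rw [key, h i i.2]
    rfl

lemma rank_add_unobs {m p : ℕ} (S : LinSys m p) (k : ℕ) :
    (obsMat S k).rank + Module.finrank ℝ (unobs S k) = S.n := by
  have := LinearMap.finrank_range_add_finrank_ker (obsMat S k).mulVecLin
  rw [Module.finrank_fin_fun] at this
  exact this

lemma unobs_anti {m p : ℕ} (S : LinSys m p) : Antitone (unobs S) := by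
  intro a b hab x hx
  rw [mem_unobs] at hx ⊢
  exact fun i hi => hx i (hi.trans_le hab)

lemma rank_obs_mono {m p : ℕ} (S : LinSys m p) : Monotone fun k => (obsMat S k).rank := by
  intro a b hab
  have h := Submodule.finrank_mono (unobs_anti S hab)
  have h1 := rank_add_unobs S a
  have h2 := rank_add_unobs S b
  simp only
  omega

lemma rank_eq_iff {m p : ℕ} (S : LinSys m p) (k : ℕ) :
    (obsMat S (k + 1)).rank = (obsMat S k).rank ↔ unobs S k ≤ unobs S (k + 1) := by
  have h1 := rank_add_unobs S k
  have h2 := rank_add_unobs S (k + 1)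
  have h3 := unobs_anti S (Nat.le_succ k)
  constructor
  · intro h
    exact (Submodule.eq_of_le_of_finrank_eq h3 (by simp only [Nat.succ_eq_add_one]; omega)).ge
  · intro h
    have := congrArg (fun V : Submodule ℝ (Fin S.n → ℝ) => Module.finrank ℝ V) (le_antisymm h h3)
    omega

lemma lag_le {m p : ℕ} {S : LinSys m p} {k : ℕ} (h : unobs S k ≤ unobs S (k + 1)) : lag S ≤ k :=
  Nat.sInf_le ((rank_eq_iff S k).2 h)

/-- The rank of the observability matrix increases strictly up to the lag. -/
lemma rank_add_le {m p : ℕ} (S : LinSys m p) (k d : ℕ) (h : k + d ≤ lag S) :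
    (obsMat S k).rank + d ≤ (obsMat S (k + d)).rank := by
  induction d with
  | zero => simp
  | succ d ih =>
    have h1 := ih (by omega)
    have h2 : (obsMat S (k + d + 1)).rank ≠ (obsMat S (k + d)).rank := fun he => by
      have : lag S ≤ k + d := Nat.sInf_le he
      omega
    have h3 := rank_obs_mono S (Nat.le_succ (k + d))
    simp only [Nat.succ_eq_add_one] at h3
    rw [← add_assoc k d 1]
    omega

/-- The set in the definition of the lag is nonempty, because ranks are bounded by `n`. -/
lemma unobs_lag {m p : ℕ} (S : LinSys m p) : unobs S (lag S) ≤ unobs S (lag S + 1) := by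
  rw [← rank_eq_iff]
  refine Nat.sInf_mem (s := {k | (obsMat S (k + 1)).rank = (obsMat S k).rank}) ?_
  by_contra hne
  rw [Set.nonempty_iff_ne_empty, not_not] at hne
  have hs : ∀ k, k ≤ (obsMat S k).rank := by
    intro k
    induction k with
    | zero => simp
    | succ k ih =>
      have h2 : (obsMat S (k + 1)).rank ≠ (obsMat S k).rank := fun he => by
        have : k ∈ {k | (obsMat S (k + 1)).rank = (obsMat S k).rank} := he
        rw [hne] at this
        exact this
      have h3 := rank_obs_mono S (Nat.le_succ k)
      simp only [Nat.succ_eq_add_one] at h3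
      omega
  have := hs (S.n + 1)
  have h2 := rank_add_unobs S (S.n + 1)
  omega

lemma unobs_stable {m p : ℕ} (S : LinSys m p) (k : ℕ) : unobs S (lag S) ≤ unobs S k := by
  -- `A` maps `unobs (k+1)` into `unobs k`, so `unobs (lag S)` is `A`-invariant.
  have step : ∀ k, ∀ x ∈ unobs S (lag S), S.A ^ k *ᵥ x ∈ unobs S (lag S) := by
    intro k
    induction k with
    | zero => intro x hx; simpa using hx
    | succ k ih =>
      intro x hx
      have h := unobs_lag S (ih x hx)
      rw [mem_unobs] at h ⊢
      intro i hi
      have := h (i + 1) (by omega)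
      rw [pow_succ' S.A k, ← Matrix.mulVec_mulVec]
      rw [pow_succ S.A i, ← Matrix.mulVec_mulVec] at this
      exact this
  intro x hx
  rw [mem_unobs]
  intro i _
  have h := unobs_lag S (step i x hx)
  rw [mem_unobs] at h
  simpa using h 0 (by omega)

lemma unobs_eq_bot_iff {m p : ℕ} (S : LinSys m p) (k : ℕ) :
    unobs S k = ⊥ ↔ (obsMat S k).rank = S.n := by
  have h := rank_add_unobs S k
  rw [← Submodule.finrank_eq_zero]
  omega

lemma unobs_eq_bot {m p : ℕ} {S : LinSys m p} {j k : ℕ} (h : unobs S j = ⊥) (hk : lag S ≤ k) :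
    unobs S k = ⊥ :=
  le_bot_iff.1 ((unobs_anti S hk).trans ((unobs_stable S j).trans h.le))

/-! ### Trajectories and windows -/

/-- The state at time `k` when starting in `x` at time `0` with input `u`. -/
def st {m p : ℕ} (S : LinSys m p) (x : Fin S.n → ℝ) (u : ℕ → Fin m → ℝ) : ℕ → Fin S.n → ℝ
  | 0 => x
  | k + 1 => S.A *ᵥ st S x u k + S.B *ᵥ u k

/-- The output at time `k` when starting in `x` at time `0` with input `u`. -/
def out {m p : ℕ} (S : LinSys m p) (x : Fin S.n → ℝ) (u : ℕ → Fin m → ℝ) (k : ℕ) : Fin p → ℝ :=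
  S.C *ᵥ st S x u k + S.D *ᵥ u k

lemma st_congr {m p : ℕ} (S : LinSys m p) (x : Fin S.n → ℝ) {u v : ℕ → Fin m → ℝ} {k : ℕ}
    (h : ∀ i < k, u i = v i) : st S x u k = st S x v k := by
  induction k with
  | zero => rfl
  | succ k ih => rw [st, st, ih fun i hi => h i (by omega), h k (by omega)]

lemma out_congr {m p : ℕ} (S : LinSys m p) (x : Fin S.n → ℝ) {u v : ℕ → Fin m → ℝ} {k : ℕ}
    (h : ∀ i ≤ k, u i = v i) : out S x u k = out S x v k := by
  rw [out, out, st_congr S x fun i hi => h i hi.le, h k le_rfl]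

lemma st_add {m p : ℕ} (S : LinSys m p) (x x' : Fin S.n → ℝ) (u u' : ℕ → Fin m → ℝ) (k : ℕ) :
    st S (x + x') (u + u') k = st S x u k + st S x' u' k := by
  induction k with
  | zero => rfl
  | succ k ih => simp only [st, ih, Pi.add_apply, Matrix.mulVec_add]; abel

lemma st_smul {m p : ℕ} (S : LinSys m p) (c : ℝ) (x : Fin S.n → ℝ) (u : ℕ → Fin m → ℝ) (k : ℕ) :
    st S (c • x) (c • u) k = c • st S x u k := by
  induction k with
  | zero => rfl
  | succ k ih => simp only [st, ih, Pi.smul_apply, Matrix.mulVec_smul, smul_add]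

lemma out_add {m p : ℕ} (S : LinSys m p) (x x' : Fin S.n → ℝ) (u u' : ℕ → Fin m → ℝ) (k : ℕ) :
    out S (x + x') (u + u') k = out S x u k + out S x' u' k := by
  simp only [out, st_add, Pi.add_apply, Matrix.mulVec_add]; abel

lemma out_smul {m p : ℕ} (S : LinSys m p) (c : ℝ) (x : Fin S.n → ℝ) (u : ℕ → Fin m → ℝ) (k : ℕ) :
    out S (c • x) (c • u) k = c • out S x u k := by
  simp only [out, st_smul, Pi.smul_apply, Matrix.mulVec_smul, smul_add]

lemma st_zero_input {m p : ℕ} (S : LinSys m p) (x : Fin S.n → ℝ) (k : ℕ) :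
    st S x 0 k = S.A ^ k *ᵥ x := by
  induction k with
  | zero => simp [st]
  | succ k ih => simp [st, ih, pow_succ', Matrix.mulVec_mulVec]

lemma out_zero_input {m p : ℕ} (S : LinSys m p) (x : Fin S.n → ℝ) (k : ℕ) :
    out S x 0 k = S.C *ᵥ (S.A ^ k *ᵥ x) := by
  simp [out, st_zero_input]

lemma st_shift {m p : ℕ} (S : LinSys m p) (x : Fin S.n → ℝ) (u : ℕ → Fin m → ℝ) (s k : ℕ) :
    st S (st S x u s) (fun i => u (s + i)) k = st S x u (s + k) := by
  induction k with
  | zero => rfl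
  | succ k ih => rw [st, ih, ← add_assoc, st]

lemma out_shift {m p : ℕ} (S : LinSys m p) (x : Fin S.n → ℝ) (u : ℕ → Fin m → ℝ) (s k : ℕ) :
    out S (st S x u s) (fun i => u (s + i)) k = out S x u (s + k) := by
  rw [out, st_shift, out]

/-- Two states with the same outputs over `k` steps (for the same input) differ by an element of
the unobservable subspace. -/
lemma sub_mem_unobs {m p : ℕ} (S : LinSys m p) (x x' : Fin S.n → ℝ) (u : ℕ → Fin m → ℝ) (k : ℕ)
    (h : ∀ i < k, out S x u i = out S x' u i) : x - x' ∈ unobs S k := by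
  rw [mem_unobs]
  intro i hi
  have h1 : out S (x + (-1 : ℝ) • x') (u + (-1 : ℝ) • u) i = 0 := by
    rw [out_add, out_smul, h i hi]; simp
  have h2 : u + (-1 : ℝ) • u = 0 := by simp
  rw [h2, out_zero_input] at h1
  simpa [sub_eq_add_neg] using h1

/-- Extension of a finite input window by zero. -/
def extInput {m : ℕ} (K : ℕ) (w : Fin (K + 1) → Fin m → ℝ) : ℕ → Fin m → ℝ :=
  fun i => if h : i < K + 1 then w ⟨i, h⟩ else 0

lemma extInput_apply {m : ℕ} (K : ℕ) (u : ℕ → Fin m → ℝ) {i : ℕ} (hi : i ≤ K) :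
    extInput K (fun j : Fin (K + 1) => u j) i = u i := by
  simp [extInput, Nat.lt_succ_of_le hi]

/-- The linear map from an initial state and an input window of length `K+1` to the input/output
window, indexed like a column of `Hkt`. -/
def windowMap {m p : ℕ} (S : LinSys m p) (K : ℕ) :
    ((Fin S.n → ℝ) × (Fin (K + 1) → Fin m → ℝ)) →ₗ[ℝ]
      ((Fin (K + 1) × Fin p) ⊕ (Fin (K + 1) × Fin m) → ℝ) where
  toFun z := Sum.elim (fun r => out S z.1 (extInput K z.2) r.1 r.2) (fun r => z.2 r.1 r.2)
  map_add' a b := by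
    have h : extInput K (a + b).2 = extInput K a.2 + extInput K b.2 := by
      ext i j; by_cases hi : i < K + 1 <;> simp [extInput, hi]
    ext (r | r)
    · simp only [Sum.elim_inl, Pi.add_apply, h, Prod.fst_add, out_add]
    · simp
  map_smul' c a := by
    have h : extInput K (c • a).2 = c • extInput K a.2 := by
      ext i j; by_cases hi : i < K + 1 <;> simp [extInput, hi]
    ext (r | r)
    · simp only [Sum.elim_inl, Pi.smul_apply, h, Prod.smul_fst, out_smul, RingHom.id_apply]
    · simp

lemma windowMap_eq {m p : ℕ} (S : LinSys m p) (K : ℕ) (x : Fin S.n → ℝ) (u : ℕ → Fin m → ℝ) :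
    windowMap S K (x, fun j => u j) =
      Sum.elim (fun r => out S x u r.1 r.2) (fun r => u r.1 r.2) := by
  ext (r | r)
  · have : out S x (extInput K fun j => u j) r.1 = out S x u r.1 :=
      out_congr S x fun i hi => extInput_apply K u (by have := r.1.2; omega)
    simp [windowMap, this]
  · simp [windowMap]

lemma col_mem_range {m p : ℕ} {S : LinSys m p} {t : ℕ} {u : ℕ → Fin m → ℝ} {y : ℕ → Fin p → ℝ}
    (hS : Explains S t u y) (K : ℕ) (c : Fin (t - K)) :
    (Hkt u y K t).col c ∈ LinearMap.range (windowMap S K) := by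
  obtain ⟨x, hx⟩ := hS
  have hst : ∀ i, (c : ℕ) + i ≤ t → st S (x c) (fun i => u (c + i)) i = x (c + i) := by
    intro i
    induction i with
    | zero => intro _; rfl
    | succ i ih =>
      intro hi
      rw [st, ih (by omega), ← add_assoc, (hx (c + i) (by omega)).1]
  refine ⟨(x c, fun j => u (c + j)), ?_⟩
  rw [windowMap_eq S K (x c) (fun i => u (c + i))]
  ext (r | r)
  · have h1 := r.1.2
    have h2 := c.2
    have h3 : (c : ℕ) + r.1 < t := by omega
    simp only [Sum.elim_inl, out]
    rw [hst _ h3.le, ← (hx _ h3).2]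
    simp [Hkt, hankel, Matrix.col, add_comm]
  · simp [Hkt, hankel, Matrix.col, add_comm]

lemma finrank_windowDomain (n m K : ℕ) :
    Module.finrank ℝ ((Fin n → ℝ) × (Fin (K + 1) → Fin m → ℝ)) = (K + 1) * m + n := by
  simp [Module.finrank_prod, Module.finrank_pi_fintype, add_comm]

/-! ### Consequences of the rank condition -/

lemma span_eq_range {m p : ℕ} {S₀ : LinSys m p} {t K : ℕ} {u : ℕ → Fin m → ℝ} {y : ℕ → Fin p → ℝ}
    (h₀ : Explains S₀ t u y) (hr : (Hkt u y K t).rank = (K + 1) * m + S₀.n) :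
    Submodule.span ℝ (Set.range (Hkt u y K t).col) = LinearMap.range (windowMap S₀ K) := by
  refine Submodule.eq_of_le_of_finrank_le ?_ ?_
  · rw [Submodule.span_le]
    rintro _ ⟨c, rfl⟩
    exact col_mem_range h₀ K c
  · rw [← Matrix.rank_eq_finrank_span_cols, hr, ← finrank_windowDomain]
    exact LinearMap.finrank_range_le _

/-- Every window of `S₀` is a window of every explaining system. -/
lemma window_transfer {m p : ℕ} {S₀ S : LinSys m p} {t K : ℕ} {u : ℕ → Fin m → ℝ}
    {y : ℕ → Fin p → ℝ} (h₀ : Explains S₀ t u y) (hr : (Hkt u y K t).rank = (K + 1) * m + S₀.n)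
    (hS : Explains S t u y) (x₀ : Fin S₀.n → ℝ) (v : ℕ → Fin m → ℝ) :
    ∃ x : Fin S.n → ℝ, ∀ i ≤ K, out S x v i = out S₀ x₀ v i := by
  have h1 : windowMap S₀ K (x₀, fun j => v j) ∈ LinearMap.range (windowMap S K) := by
    have : Submodule.span ℝ (Set.range (Hkt u y K t).col) ≤ LinearMap.range (windowMap S K) := by
      rw [Submodule.span_le]
      rintro _ ⟨c, rfl⟩
      exact col_mem_range hS K c
    apply this
    rw [span_eq_range h₀ hr]
    exact ⟨_, rfl⟩
  obtain ⟨⟨x, w⟩, hx⟩ := h1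
  have hw : w = fun j : Fin (K + 1) => v j := by
    ext i j
    have := congrFun hx (Sum.inr (i, j))
    simpa [windowMap] using this
  subst hw
  refine ⟨x, fun i hi => ?_⟩
  rw [windowMap_eq, windowMap_eq] at hx
  ext j
  simpa using congrFun hx (Sum.inl (⟨i, by omega⟩, j))

lemma unobs_eq_bot_of_rank {m p : ℕ} {S₀ : LinSys m p} {t K : ℕ} {u : ℕ → Fin m → ℝ}
    {y : ℕ → Fin p → ℝ} (h₀ : Explains S₀ t u y)
    (hr : (Hkt u y K t).rank = (K + 1) * m + S₀.n) : unobs S₀ (K + 1) = ⊥ := by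
  have hker : LinearMap.ker (windowMap S₀ K) = ⊥ := by
    rw [← Submodule.finrank_eq_zero]
    have h1 := LinearMap.finrank_range_add_finrank_ker (windowMap S₀ K)
    rw [← span_eq_range h₀ hr, ← Matrix.rank_eq_finrank_span_cols, hr, finrank_windowDomain] at h1
    omega
  rw [eq_bot_iff]
  intro x hx
  rw [mem_unobs] at hx
  have : (x, fun j : Fin (K + 1) => (0 : ℕ → Fin m → ℝ) j) ∈ LinearMap.ker (windowMap S₀ K) := by
    rw [LinearMap.mem_ker, windowMap_eq]
    ext (r | r)
    · rw [Sum.elim_inl, out_zero_input, hx r.1 r.1.2]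
      rfl
    · simp
  rw [hker, Submodule.mem_bot] at this
  exact congrArg Prod.fst this

/-- If the length `K+1` windows of `S₀` are windows of `S` and `lag S ≤ K`, then
`lag S₀ ≤ lag S`: with zero input, a recursion for the outputs of `S` is one for those of `S₀`. -/
lemma lag_le_of_transfer {m p : ℕ} {S₀ S : LinSys m p} {K : ℕ}
    (htr : ∀ (x₀ : Fin S₀.n → ℝ) (v : ℕ → Fin m → ℝ),
      ∃ x : Fin S.n → ℝ, ∀ i ≤ K, out S x v i = out S₀ x₀ v i)
    (hK : lag S ≤ K) : lag S₀ ≤ lag S := by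
  apply lag_le
  intro x₀ hx₀
  obtain ⟨x, hx⟩ := htr x₀ 0
  simp only [out_zero_input] at hx
  rw [mem_unobs] at hx₀ ⊢
  have h1 : x ∈ unobs S (lag S) := by
    rw [mem_unobs]
    intro i hi
    rw [hx i (by omega), hx₀ i hi]
  have h2 := unobs_lag S h1
  rw [mem_unobs] at h2
  intro i hi
  rw [← hx i (by omega), h2 i hi]

lemma rank_le_of_transfer {m p : ℕ} {S₀ S : LinSys m p} {K k : ℕ}
    (htr : ∀ (x₀ : Fin S₀.n → ℝ) (v : ℕ → Fin m → ℝ),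
      ∃ x : Fin S.n → ℝ, ∀ i ≤ K, out S x v i = out S₀ x₀ v i)
    (hk : k ≤ K) : (obsMat S₀ k).rank ≤ (obsMat S k).rank := by
  refine Submodule.finrank_mono ?_
  rintro _ ⟨x₀, rfl⟩
  obtain ⟨x, hx⟩ := htr x₀ 0
  refine ⟨x, ?_⟩
  ext ⟨i, j⟩
  have h := congrFun (hx i (by omega)) j
  rw [out_zero_input, out_zero_input, Matrix.mulVec_mulVec, Matrix.mulVec_mulVec] at h
  exact h

/-- The surplus of the lag of `S` over that of `S₀` is at most the surplus of state dimensions. -/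
lemma lag_add_le {m p : ℕ} {S₀ S : LinSys m p} {K : ℕ}
    (htr : ∀ (x₀ : Fin S₀.n → ℝ) (v : ℕ → Fin m → ℝ),
      ∃ x : Fin S.n → ℝ, ∀ i ≤ K, out S x v i = out S₀ x₀ v i)
    (hobs : unobs S₀ (K + 1) = ⊥) (hK : lag S₀ ≤ K) (hl : lag S₀ ≤ lag S) :
    lag S + S₀.n ≤ S.n + lag S₀ := by
  have h1 := rank_le_of_transfer htr hK
  rw [(unobs_eq_bot_iff S₀ _).1 (unobs_eq_bot hobs le_rfl)] at h1
  have h2 := rank_add_le S (lag S₀) (lag S - lag S₀) (by omega)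
  have h3 := rank_add_unobs S (lag S₀ + (lag S - lag S₀))
  omega

/-- If `K` outputs determine the state of `S`, the windows glue to full trajectories. -/
lemma trajectory_transfer {m p : ℕ} {S₀ S : LinSys m p} {K : ℕ}
    (htr : ∀ (x₀ : Fin S₀.n → ℝ) (v : ℕ → Fin m → ℝ),
      ∃ x : Fin S.n → ℝ, ∀ i ≤ K, out S x v i = out S₀ x₀ v i)
    (hobs : unobs S K = ⊥) (x₀ : Fin S₀.n → ℝ) (v : ℕ → Fin m → ℝ) :
    ∃ x : Fin S.n → ℝ, ∀ i, out S x v i = out S₀ x₀ v i := by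
  choose z hz using fun s => htr (st S₀ x₀ v s) (fun i => v (s + i))
  have hstep : ∀ s, z (s + 1) = S.A *ᵥ z s + S.B *ᵥ v s := by
    intro s
    have h : z (s + 1) - (S.A *ᵥ z s + S.B *ᵥ v s) ∈ unobs S K := by
      refine sub_mem_unobs S _ _ (fun i => v (s + 1 + i)) K fun i hi => ?_
      have e1 := hz (s + 1) i hi.le
      have e2 := hz s (1 + i) (by omega)
      have e3 := out_shift S (z s) (fun i => v (s + i)) 1 i
      rw [out_shift] at e1 e2
      simp only [st, add_zero, ← add_assoc] at e3
      rw [e1, e3, e2, add_assoc]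
    rw [hobs, Submodule.mem_bot, sub_eq_zero] at h
    exact h
  have hst : ∀ s, st S (z 0) v s = z s := by
    intro s
    induction s with
    | zero => rfl
    | succ s ih => rw [st, ih, hstep]
  refine ⟨z 0, fun i => ?_⟩
  have h := hz i 0 (Nat.zero_le _)
  rw [← hst i, out_shift, out_shift] at h
  simpa using h

lemma st_impulse {m p : ℕ} (S : LinSys m p) (K : ℕ) (w : Fin m → ℝ) (j : ℕ) :
    st S 0 (Pi.single K w) (K + 1 + j) = S.A ^ j *ᵥ (S.B *ᵥ w) := by
  have h0 : st S 0 (Pi.single K w) K = 0 := by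
    rw [st_congr S 0 (v := 0) fun i hi => by simp [hi.ne], st_zero_input]
    simp
  induction j with
  | zero => simp [st, h0]
  | succ j ih =>
    rw [← add_assoc, st, ih, Pi.single_eq_of_ne (by omega)]
    simp [pow_succ', Matrix.mulVec_mulVec, Matrix.mul_assoc]

lemma markov_eq {m p : ℕ} {S₀ S : LinSys m p} {K : ℕ}
    (htr : ∀ (x₀ : Fin S₀.n → ℝ) (v : ℕ → Fin m → ℝ),
      ∃ x : Fin S.n → ℝ, ∀ i ≤ K, out S x v i = out S₀ x₀ v i)
    (hobs : unobs S K = ⊥) (j : ℕ) : S.C * S.A ^ j * S.B = S₀.C * S₀.A ^ j * S₀.B := by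
  apply Matrix.ext_of_mulVec_single
  intro a
  obtain ⟨x, hx⟩ := trajectory_transfer htr hobs 0 (Pi.single K (Pi.single a 1))
  -- The impulse is applied at time `K`; the `K` zero samples before it force `x = 0`.
  have hx0 : x = 0 := by
    have hmem : x ∈ unobs S K := by
      rw [mem_unobs]
      intro i hi
      have hz : ∀ i' ≤ i, (Pi.single K (Pi.single a 1) : ℕ → Fin m → ℝ) i' =
          (0 : ℕ → Fin m → ℝ) i' := fun i' hi' => Pi.single_eq_of_ne (by omega) _
      have h := hx i
      rw [out_congr S x hz, out_congr S₀ 0 hz, out_zero_input, out_zero_input] at h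
      simpa using h
    simpa [hobs] using hmem
  subst hx0
  have h := hx (K + 1 + j)
  rw [out, out, st_impulse, st_impulse,
    show (Pi.single K (Pi.single a 1) : ℕ → Fin m → ℝ) (K + 1 + j) = 0 from
      Pi.single_eq_of_ne (by omega) _] at h
  rw [Matrix.mulVec_zero, Matrix.mulVec_zero, add_zero, add_zero, Matrix.mulVec_mulVec,
    Matrix.mulVec_mulVec, Matrix.mulVec_mulVec, Matrix.mulVec_mulVec] at h
  exact h

lemma obs_mul_ctrl_apply {m p : ℕ} (S : LinSys m p) (k k' : ℕ) (r : Fin k × Fin p)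
    (c : Fin k' × Fin m) :
    (obsMat S k * ctrlMat S k') r c = (S.C * S.A ^ ((r.1 : ℕ) + c.1) * S.B) r.2 c.2 := by
  rw [pow_add, ← Matrix.mul_assoc, Matrix.mul_assoc (S.C * S.A ^ (r.1 : ℕ))]
  rfl

/-- A minimal system has the fewest states among systems with the same Markov parameters, and any
other system with as few states is minimal too. -/
lemma states_eq_and_minimal {m p : ℕ} {S₀ S : LinSys m p} (hS : MinimalSys S)
    (hmk : ∀ j, S.C * S.A ^ j * S.B = S₀.C * S₀.A ^ j * S₀.B) (hle : S₀.n ≤ S.n) :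
    S.n = S₀.n ∧ MinimalSys S₀ := by
  have hprod : obsMat S S.n * ctrlMat S S.n = obsMat S₀ S.n * ctrlMat S₀ S.n := by
    ext r c
    rw [obs_mul_ctrl_apply, obs_mul_ctrl_apply, hmk]
  have hsurj : LinearMap.range (ctrlMat S S.n).mulVecLin = ⊤ := by
    apply Submodule.eq_top_of_finrank_eq
    have h : (ctrlMat S S.n).rank = S.n := hS.1
    simpa [Matrix.rank] using h
  have hrk : (obsMat S₀ S.n * ctrlMat S₀ S.n).rank = S.n := by
    rw [← hprod, Matrix.rank, Matrix.mulVecLin_mul, LinearMap.range_comp_of_range_eq_top _ hsurj]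
    exact hS.2
  have h1 := Matrix.rank_mul_le_left (obsMat S₀ S.n) (ctrlMat S₀ S.n)
  have h2 := Matrix.rank_mul_le_right (obsMat S₀ S.n) (ctrlMat S₀ S.n)
  have h3 := (obsMat S₀ S.n).rank_le_card_width
  have h4 := (ctrlMat S₀ S.n).rank_le_card_height
  rw [Fintype.card_fin] at h3 h4
  have hn : S.n = S₀.n := by omega
  have hc : (ctrlMat S₀ S.n).rank = S₀.n := by omega
  have ho : (obsMat S₀ S.n).rank = S₀.n := by omega
  rw [hn] at hc ho
  exact ⟨hn, hc, ho⟩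

/-- **Theorem 1 (consequences).** If the informativity conditions hold, then
`ℓ_true = ℓ_min,t`, `n_true = n_min,t`, and
`ℰ_t ∩ M ∩ S_{L,N} = ℰ_t(n_min,t)`. -/
theorem informative_consequences {m p : ℕ} (hm : 1 ≤ m) (hp : 1 ≤ p)
    (t L N : ℕ) (u : ℕ → Fin m → ℝ) (y : ℕ → Fin p → ℝ)
    (hu : ∃ s < t, u s ≠ 0)
    (sysT : LinSys m p) (hmin : MinimalSys sysT) (hdata : Explains sysT t u y)
    (hL : lag sysT ≤ L) (hN : sysT.n ≤ N)
    (hlen : min L (N - nMin t u y + lMin t u y) +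
        (min L (N - nMin t u y + lMin t u y) + 1) * m + nMin t u y ≤ t)
    (hrank : (Hkt u y (min L (N - nMin t u y + lMin t u y)) t).rank =
        (min L (N - nMin t u y + lMin t u y) + 1) * m + nMin t u y) :
    lag sysT = lMin t u y ∧ sysT.n = nMin t u y ∧
      ExplSet t u y ∩ Mset m p ∩ SLN m p L N =
        {sys ∈ ExplSet t u y | sys.n = nMin t u y} := by
  have hnT : nMin t u y ≤ sysT.n := Nat.sInf_le ⟨sysT, hdata, rfl⟩
  have hlT : lMin t u y ≤ lag sysT := Nat.sInf_le ⟨sysT, hdata, rfl⟩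
  obtain ⟨S₁, hS₁, hlag₁⟩ : lMin t u y ∈ {ℓ | ∃ sys : LinSys m p, Explains sys t u y ∧ lag sys = ℓ} :=
    Nat.sInf_mem ⟨_, sysT, hdata, rfl⟩
  obtain ⟨S₀, hS₀, hn₀⟩ : nMin t u y ∈ {n | ∃ sys : LinSys m p, Explains sys t u y ∧ sys.n = n} :=
    Nat.sInf_mem ⟨_, sysT, hdata, rfl⟩
  have hKdef : ∀ a ≤ L, a ≤ N - nMin t u y + lMin t u y →
      a ≤ min L (N - nMin t u y + lMin t u y) := fun a h1 h2 => le_min h1 h2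
  generalize min L (N - nMin t u y + lMin t u y) = K at hrank hKdef
  have hlK : lMin t u y ≤ K := hKdef _ (hlT.trans hL) (Nat.le_add_left _ _)
  have lag_of_min : ∀ S ∈ ExplSet t u y, S.n = nMin t u y → lag S = lMin t u y := by
    intro S hS hn
    refine le_antisymm ?_ (Nat.sInf_le ⟨S, hS, rfl⟩)
    rw [← hlag₁]
    exact lag_le_of_transfer (window_transfer hS (by rw [hrank, hn]) hS₁) (by omega)
  have key : ∀ S₀ ∈ ExplSet t u y, S₀.n = nMin t u y → ∀ S ∈ ExplSet t u y, MinimalSys S →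
      lag S ≤ L → S.n ≤ N → S.n = nMin t u y ∧ MinimalSys S₀ := by
    intro S₀ hS₀ hn₀ S hS hSm hSL hSN
    have hr : (Hkt u y K t).rank = (K + 1) * m + S₀.n := by rw [hrank, hn₀]
    have htr := window_transfer hS₀ hr hS
    have hl₀ := lag_of_min S₀ hS₀ hn₀
    have hlS : lMin t u y ≤ lag S := Nat.sInf_le ⟨S, hS, rfl⟩
    have hb := lag_add_le htr (unobs_eq_bot_of_rank hS₀ hr) (by omega) (by omega)
    have hSK : lag S ≤ K := hKdef _ hSL (by omega)
    have hobs : unobs S K = ⊥ := unobs_eq_bot ((unobs_eq_bot_iff S S.n).2 hSm.2) hSK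
    have hle : S₀.n ≤ S.n := hn₀ ▸ Nat.sInf_le ⟨S, hS, rfl⟩
    obtain ⟨h1, h2⟩ := states_eq_and_minimal hSm (markov_eq htr hobs) hle
    exact ⟨h1.trans hn₀, h2⟩
  have hnT' : sysT.n = nMin t u y := (key S₀ hS₀ hn₀ sysT hdata hmin hL hN).1
  refine ⟨lag_of_min sysT hdata hnT', hnT', ?_⟩
  ext S
  constructor
  · rintro ⟨⟨hS, hSm⟩, hSL, hSN⟩
    exact ⟨hS, (key S₀ hS₀ hn₀ S hS hSm hSL hSN).1⟩
  · rintro ⟨hS, hn⟩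
    have hl := lag_of_min S hS hn
    exact ⟨⟨hS, (key S hS hn sysT hdata hmin hL hN).2⟩, by omega, by omega⟩
end

section
/- Let t ≥ 2 and k ≥ 1, and let (u_{[0,t−1]}, y_{[0,t−1]}) be data with u(s) ∈ ℝ^m and y(s) ∈ ℝ^p. The map sending a row vector (ξ_y, ξ_u) in the left kernel of H_{k−1,t} (with ξ_y of length kp acting on the output block rows and ξ_u of length km acting on the input block rows) to the row vector (ξ_y, ξ_u, 0_m) — where the m appended zeros act on the last input block row u_{[k,t−1]} of G_{k,t} — injectively maps the left kernel of H_{k−1,t} into the left kernel of G_{k,t}; moreover, rank G_{k,t} = m + rank H_{k−1,t} if and only if this map is surjective onto the left kernel of G_{k,t}. -/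
/-!
Deleting the last input block row of `G_{k,t}` leaves `H_{k-1,t}` without its last column, so
appending `m` zeros maps the left kernel of `H_{k-1,t}` linearly and injectively into that of
`G_{k,t}` (`extend_vecMul`, `extendKernelVec_injective`). Such a map is onto exactly when the two
left kernels have equal dimension. By rank–nullity (`finrank_leftKernel_add_rank`) these dimensions
are `kp + km - rank H_{k-1,t}` and `kp + (k+1)m - rank G_{k,t}`, which agree iff
`rank G_{k,t} = m + rank H_{k-1,t}`.
-/

open Matrix

/-- The map appending `m` zeros (acting on the last input block row of
`G_{k,t}`) to a left-kernel row vector of `H_{k-1,t}`.  Here `k = j + 1 ≥ 1`,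
so `H_{k-1,t} = Hkt u y j t` and `G_{k,t} = Gkt u y (j+1) t`. -/
def extendKernelVec {m p : ℕ} (j : ℕ)
    (ξ : ((Fin (j + 1) × Fin p) ⊕ (Fin (j + 1) × Fin m)) → ℝ) :
    ((Fin (j + 1) × Fin p) ⊕ (Fin (j + 2) × Fin m)) → ℝ :=
  Sum.elim (fun r => ξ (Sum.inl r))
    (fun r => if h : (r.1 : ℕ) < j + 1 then ξ (Sum.inr (⟨r.1, h⟩, r.2)) else 0)

/-- `extendKernelVec` as a linear map. The codomain is indexed by `j + 1 + 1` so that it agrees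
syntactically with the row index of `Gkt u y (j + 1) t`. -/
def extendLin (m p j : ℕ) :
    (((Fin (j + 1) × Fin p) ⊕ (Fin (j + 1) × Fin m)) → ℝ) →ₗ[ℝ]
      (((Fin (j + 1) × Fin p) ⊕ (Fin (j + 1 + 1) × Fin m)) → ℝ) where
  toFun := extendKernelVec j
  map_add' a b := by
    ext (r | r)
    · simp [extendKernelVec]
    · simp only [extendKernelVec, Sum.elim_inr, Pi.add_apply]
      split_ifs <;> simp
  map_smul' c a := by
    ext (r | r)
    · simp [extendKernelVec]
    · simp [extendKernelVec]

theorem extendKernelVec_injective (m p j : ℕ) :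
    Function.Injective (extendKernelVec (m := m) (p := p) j) := by
  intro a b hab
  ext (r | r)
  · exact congrFun hab (Sum.inl r)
  · have h := congrFun hab (Sum.inr (r.1.castSucc, r.2))
    simpa [extendKernelVec, Nat.lt_succ_iff.mp r.1.isLt] using h

/-- Each column of `G_{j+1,t}`, paired with an extended vector, gives the same value as the
column of `H_{j,t}` with the same index: `G_{j+1,t}` restricted to the rows of `H_{j,t}` is
`H_{j,t}` with its last column deleted. -/
theorem extend_vecMul {m p : ℕ} (t j : ℕ) (u : ℕ → Fin m → ℝ) (y : ℕ → Fin p → ℝ)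
    (ξ : ((Fin (j + 1) × Fin p) ⊕ (Fin (j + 1) × Fin m)) → ℝ) (c : Fin (t - (j + 1))) :
    (extendKernelVec j ξ ᵥ* Gkt u y (j + 1) t) c =
      (ξ ᵥ* Hkt u y j t) (c.castLE (by omega)) := by
  simp only [Matrix.vecMul, dotProduct, Fintype.sum_sum_type, Fintype.sum_prod_type]
  congr 1
  rw [Fin.sum_univ_castSucc]
  have hlt (i : Fin (j + 1)) : (i : ℕ) ≤ j := Nat.lt_succ_iff.mp i.isLt
  simp [extendKernelVec, Gkt, Hkt, hankel, hlt]

/-- Rank–nullity for the left kernel. -/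
theorem finrank_leftKernel_add_rank {a b : Type*} [Fintype a] [Fintype b]
    (M : Matrix a b ℝ) :
    Module.finrank ℝ (LinearMap.ker M.vecMulLinear) + M.rank = Fintype.card a := by
  have h := LinearMap.finrank_range_add_finrank_ker (Mᵀ).mulVecLin
  rw [← Matrix.rank, Matrix.rank_transpose, Matrix.mulVecLin_transpose,
    Module.finrank_fintype_fun_eq_card] at h
  omega

/-- With `k := j + 1 ≥ 1`: the map `(ξ_y, ξ_u) ↦ (ξ_y, ξ_u, 0_m)` injectively
maps the left kernel of `H_{k-1,t}` into the left kernel of `G_{k,t}`, and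
`rank G_{k,t} = m + rank H_{k-1,t}` iff this map is surjective onto the left
kernel of `G_{k,t}`. -/
theorem leftKernel_extension {m p : ℕ} (t j : ℕ) (ht : 2 ≤ t)
    (u : ℕ → Fin m → ℝ) (y : ℕ → Fin p → ℝ) :
    (∀ ξ, ξ ᵥ* Hkt u y j t = 0 →
        extendKernelVec j ξ ᵥ* Gkt u y (j + 1) t = 0) ∧
    Set.InjOn (extendKernelVec (m := m) (p := p) j)
      {ξ | ξ ᵥ* Hkt u y j t = 0} ∧
    ((Gkt u y (j + 1) t).rank = m + (Hkt u y j t).rank ↔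
      ∀ η, η ᵥ* Gkt u y (j + 1) t = 0 →
        ∃ ξ, ξ ᵥ* Hkt u y j t = 0 ∧ extendKernelVec j ξ = η) := by
  have hmem : ∀ ξ, ξ ᵥ* Hkt u y j t = 0 →
      extendKernelVec j ξ ᵥ* Gkt u y (j + 1) t = 0 := by
    intro ξ hξ
    ext c
    rw [extend_vecMul, hξ]
    rfl
  refine ⟨hmem, (extendKernelVec_injective m p j).injOn, ?_⟩
  have hinj : Function.Injective (extendLin m p j) := extendKernelVec_injective m p j
  have hH := finrank_leftKernel_add_rank (Hkt u y j t)
  have hG := finrank_leftKernel_add_rank (Gkt u y (j + 1) t)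
  simp only [Fintype.card_sum, Fintype.card_prod, Fintype.card_fin] at hH hG
  have hcard : (j + 1 + 1) * m = (j + 1) * m + m := by ring
  have hle : (LinearMap.ker (Hkt u y j t).vecMulLinear).map (extendLin m p j) ≤
      LinearMap.ker (Gkt u y (j + 1) t).vecMulLinear := by
    rintro _ ⟨ξ, hξ, rfl⟩
    exact hmem ξ hξ
  have hmap : Module.finrank ℝ
      ((LinearMap.ker (Hkt u y j t).vecMulLinear).map (extendLin m p j)) =
      Module.finrank ℝ (LinearMap.ker (Hkt u y j t).vecMulLinear) :=
    (LinearEquiv.finrank_eq (Submodule.equivMapOfInjective _ hinj _)).symm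
  constructor
  · intro hr η hη
    have heq := Submodule.eq_of_le_of_finrank_eq hle (by omega)
    have hη' : η ∈ LinearMap.ker (Gkt u y (j + 1) t).vecMulLinear := hη
    rw [← heq] at hη'
    exact hη'
  · intro hsurj
    have heq := le_antisymm hle (fun η hη => hsurj η hη)
    rw [heq] at hmap
    omega
end

section
/- Let (A,B,C,D) be a discrete-time linear system with n states, m inputs and p outputs such that (C,A) is observable, and suppose it explains the data (u_{[0,t−1]}, y_{[0,t−1]}) with compatible state sequence x(0),...,x(t). Let k satisfy ℓ(C,A) ≤ k ≤ t−1. Then rank H_{k,t} equals the rank of the matrix obtained by stacking x_{[0,t−k−1]} on top of H_k(u_{[0,t−1]}), and, if moreover k ≥ 1, rank G_{k,t} also equals this rank; in particular rank G_{k,t} = rank H_{k,t}. -/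
/-!
Two matrices with the same columns have the same rank as soon as they have the same kernel, so it
suffices to compare kernels. For `v` in `ℝ^{t-k}` the `v`-combinations `X_r`, `U_r`, `Y_r` of the
windows `x(r), …, x(r+t-k-1)`, and likewise for `u` and `y`, again satisfy the system equations
for `r ≤ k` (`hankelComb_state`, `hankelComb_output`), and the three matrices of the theorem
map `v` to these combinations. If `X_0 = 0` and `U_r = 0` for all `r ≤ k`, then `Y_r = 0` for all
`r ≤ k`. Conversely, if `U_r = 0` for `r ≤ k` and `Y_r = 0` for `r < k`, then `C A^r X_0 = 0` for
`r < k`, so `X_0` lies in the kernel of the observability matrix with `k` block rows. That kernel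
is trivial for `k ≥ ℓ(C,A)` (`eq_zero_of_lag_le`): the equality of ranks at the lag says that the
kernel does not shrink when one more block row is added, hence by shift invariance it never shrinks
again, and observability makes it zero eventually.
-/

open Matrix

/-- The matrix obtained by stacking `x_{[0,c-1]}` on top of the Hankel matrix
of inputs with `k+1` block rows and `c` columns. -/
def stateInputMat {m n : ℕ} (x : ℕ → Fin n → ℝ) (u : ℕ → Fin m → ℝ)
    (k c : ℕ) : Matrix (Fin n ⊕ (Fin (k + 1) × Fin m)) (Fin c) ℝ :=
  Matrix.fromRows (Matrix.of fun i j => x (j : ℕ) i) (hankel u (k + 1) c)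

theorem rank_eq_of_mulVec_eq_zero_iff {α β γ : Type*} [Fintype α] [Fintype β] [Fintype γ]
    (M : Matrix α γ ℝ) (N : Matrix β γ ℝ) (h : ∀ v, M *ᵥ v = 0 ↔ N *ᵥ v = 0) :
    M.rank = N.rank := by
  have hker : LinearMap.ker M.mulVecLin = LinearMap.ker N.mulVecLin := by
    ext v
    simpa using h v
  have h1 := M.mulVecLin.finrank_range_add_finrank_ker
  have h2 := N.mulVecLin.finrank_range_add_finrank_ker
  rw [hker] at h1
  unfold Matrix.rank
  omega

theorem obsMat_mulVec_eq_zero_iff {m p : ℕ} (sys : LinSys m p) (k : ℕ) (z : Fin sys.n → ℝ) :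
    obsMat sys k *ᵥ z = 0 ↔ ∀ r < k, (sys.C * sys.A ^ r) *ᵥ z = 0 := by
  constructor
  · intro h r hr
    funext i
    exact congrFun h (⟨r, hr⟩, i)
  · intro h
    funext ri
    exact congrFun (h ri.1 ri.1.2) ri.2

theorem ker_obsMat_antitone {m p : ℕ} (sys : LinSys m p) {k l : ℕ} (hkl : k ≤ l) :
    LinearMap.ker (obsMat sys l).mulVecLin ≤ LinearMap.ker (obsMat sys k).mulVecLin := by
  intro z hz
  simp only [LinearMap.mem_ker, mulVecLin_apply, obsMat_mulVec_eq_zero_iff] at hz ⊢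
  exact fun r hr => hz r (hr.trans_le hkl)

/-- Observability puts the number of states into the set whose infimum is the lag, so that this
infimum is attained. -/
theorem rank_obsMat_lag {m p : ℕ} (sys : LinSys m p) (hobs : Observable sys) :
    (obsMat sys (lag sys + 1)).rank = (obsMat sys (lag sys)).rank := by
  have hmem : lag sys ∈ {k | (obsMat sys (k + 1)).rank = (obsMat sys k).rank} := by
    refine Nat.sInf_mem ⟨sys.n, ?_⟩
    have h1 := (obsMat sys (sys.n + 1)).mulVecLin.finrank_range_add_finrank_ker
    have h2 := (obsMat sys sys.n).mulVecLin.finrank_range_add_finrank_ker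
    have h3 := Submodule.finrank_mono (ker_obsMat_antitone sys (Nat.le_succ sys.n))
    have h4 : (obsMat sys sys.n).rank = sys.n := hobs
    have h5 := (obsMat sys (sys.n + 1)).rank_le_card_width
    rw [Fintype.card_fin] at h5
    simp only [Set.mem_ofPred_eq]
    unfold Matrix.rank at *
    simp only [Nat.succ_eq_add_one] at h3
    omega
  exact hmem

/-- The kernel of the observability matrix is the same with `lag sys` block rows as with one more
block row. -/
theorem mulVec_lag_eq_zero {m p : ℕ} (sys : LinSys m p) (hobs : Observable sys)
    (z : Fin sys.n → ℝ) (hz : ∀ r < lag sys, (sys.C * sys.A ^ r) *ᵥ z = 0) :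
    (sys.C * sys.A ^ lag sys) *ᵥ z = 0 := by
  have hrank := rank_obsMat_lag sys hobs
  have h1 := (obsMat sys (lag sys + 1)).mulVecLin.finrank_range_add_finrank_ker
  have h2 := (obsMat sys (lag sys)).mulVecLin.finrank_range_add_finrank_ker
  have hker := Submodule.eq_of_le_of_finrank_eq (ker_obsMat_antitone sys (Nat.le_succ (lag sys)))
    (by unfold Matrix.rank at hrank; simp only [Nat.succ_eq_add_one]; omega)
  have hmem : z ∈ LinearMap.ker (obsMat sys (lag sys)).mulVecLin := by
    simpa [obsMat_mulVec_eq_zero_iff] using hz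
  rw [← hker] at hmem
  simp only [LinearMap.mem_ker, mulVecLin_apply, obsMat_mulVec_eq_zero_iff] at hmem
  exact hmem _ (Nat.lt_succ_self _)

theorem eq_zero_of_lag_le {m p : ℕ} (sys : LinSys m p) (hobs : Observable sys) {k : ℕ}
    (hk : lag sys ≤ k) (z : Fin sys.n → ℝ) (hz : ∀ r < k, (sys.C * sys.A ^ r) *ᵥ z = 0) :
    z = 0 := by
  have hall : ∀ r, (sys.C * sys.A ^ r) *ᵥ z = 0 := by
    intro r
    induction r using Nat.strong_induction_on with
    | _ r ih =>
      by_cases hr : r < lag sys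
      · exact hz r (hr.trans_le hk)
      -- Apply the stationarity of the kernel at the lag to the shifted state `A^(r - lag) z`.
      have hshift : ∀ i, (sys.C * sys.A ^ i) *ᵥ (sys.A ^ (r - lag sys) *ᵥ z)
          = (sys.C * sys.A ^ (i + (r - lag sys))) *ᵥ z := by
        intro i
        rw [mulVec_mulVec, Matrix.mul_assoc, ← pow_add]
      have h := mulVec_lag_eq_zero sys hobs (sys.A ^ (r - lag sys) *ᵥ z) (fun i hi => by
        rw [hshift]
        exact ih _ (by omega))
      rw [hshift] at h
      rwa [show lag sys + (r - lag sys) = r by omega] at h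
  have hn : (obsMat sys sys.n) *ᵥ z = 0 :=
    (obsMat_mulVec_eq_zero_iff sys _ z).2 fun r _ => hall r
  have h1 := (obsMat sys sys.n).mulVecLin.finrank_range_add_finrank_ker
  have h2 : (obsMat sys sys.n).rank = sys.n := hobs
  have h3 : Module.finrank ℝ (LinearMap.ker (obsMat sys sys.n).mulVecLin) = 0 := by
    unfold Matrix.rank at h2
    rw [Module.finrank_fin_fun] at h1
    omega
  have h4 := Submodule.finrank_eq_zero.1 h3
  have h5 : z ∈ LinearMap.ker (obsMat sys sys.n).mulVecLin := by simpa using hn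
  rw [h4] at h5
  simpa using h5

/-- The combination `∑ c, v c • f (r + c)` of the window of `f` starting at time `r`; it is the
`r`-th block of `hankel f rows cols *ᵥ v`. -/
def hankelComb {d c : ℕ} (v : Fin c → ℝ) (f : ℕ → Fin d → ℝ) (r : ℕ) : Fin d → ℝ :=
  ∑ j : Fin c, v j • f (r + j)

theorem hankel_mulVec_eq_zero_iff {d c : ℕ} (v : Fin c → ℝ) (f : ℕ → Fin d → ℝ) (k : ℕ) :
    hankel f k c *ᵥ v = 0 ↔ ∀ r < k, hankelComb v f r = 0 := by
  have key : ∀ (r : Fin k) (i : Fin d),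
      (hankel f k c *ᵥ v) (r, i) = hankelComb v f r i := by
    intro r i
    simp [hankel, hankelComb, mulVec, dotProduct, mul_comm]
  constructor
  · intro h r hr
    funext i
    rw [← key ⟨r, hr⟩ i, h]
    rfl
  · intro h
    funext ri
    rw [key ri.1 ri.2, h ri.1 ri.1.2]
    rfl

theorem stack_mulVec_eq_zero_iff {α β : Type*} {c : ℕ} (M : Matrix α (Fin c) ℝ)
    (N : Matrix β (Fin c) ℝ) (v : Fin c → ℝ) :
    fromRows M N *ᵥ v = 0 ↔ M *ᵥ v = 0 ∧ N *ᵥ v = 0 := by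
  rw [fromRows_mulVec]
  constructor
  · intro h
    exact ⟨funext fun i => congrFun h (Sum.inl i), funext fun i => congrFun h (Sum.inr i)⟩
  · rintro ⟨h1, h2⟩
    funext i
    cases i with
    | inl i => exact congrFun h1 i
    | inr i => exact congrFun h2 i

theorem stateInputMat_mulVec_eq_zero_iff {m n : ℕ} (x : ℕ → Fin n → ℝ) (u : ℕ → Fin m → ℝ)
    (k c : ℕ) (v : Fin c → ℝ) :
    stateInputMat x u k c *ᵥ v = 0 ↔
      hankelComb v x 0 = 0 ∧ ∀ r < k + 1, hankelComb v u r = 0 := by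
  unfold stateInputMat
  rw [stack_mulVec_eq_zero_iff, hankel_mulVec_eq_zero_iff]
  have key : (Matrix.of fun (i : Fin n) (j : Fin c) => x (j : ℕ) i) *ᵥ v = hankelComb v x 0 := by
    funext i
    simp [hankelComb, mulVec, dotProduct, mul_comm]
  rw [key]

section Combination

variable {m p t k : ℕ} {u : ℕ → Fin m → ℝ} {y : ℕ → Fin p → ℝ} {sys : LinSys m p}
  {x : ℕ → Fin sys.n → ℝ}

theorem hankelComb_state (hx : ExplainsWith sys t u y x) (v : Fin (t - k) → ℝ) {r : ℕ}
    (hr : r < k + 1) :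
    hankelComb v x (r + 1) = sys.A *ᵥ hankelComb v x r + sys.B *ᵥ hankelComb v u r := by
  simp only [hankelComb, mulVec_sum, mulVec_smul, ← Finset.sum_add_distrib, ← smul_add]
  refine Finset.sum_congr rfl fun j _ => ?_
  rw [show r + 1 + (j : ℕ) = r + j + 1 by omega, (hx (r + j) (by omega)).1]

theorem hankelComb_output (hx : ExplainsWith sys t u y x) (v : Fin (t - k) → ℝ) {r : ℕ}
    (hr : r < k + 1) :
    hankelComb v y r = sys.C *ᵥ hankelComb v x r + sys.D *ᵥ hankelComb v u r := by
  simp only [hankelComb, mulVec_sum, mulVec_smul, ← Finset.sum_add_distrib, ← smul_add]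
  refine Finset.sum_congr rfl fun j _ => ?_
  rw [(hx (r + j) (by omega)).2]

/-- With the inputs annihilated by `v`, the combined output is the free response to the combined
initial state. -/
theorem hankelComb_free_response (hx : ExplainsWith sys t u y x) (v : Fin (t - k) → ℝ)
    (hu : ∀ r < k + 1, hankelComb v u r = 0) {r : ℕ} (hr : r < k + 1) :
    hankelComb v y r = (sys.C * sys.A ^ r) *ᵥ hankelComb v x 0 := by
  have hstate : ∀ s < k + 1, hankelComb v x s = sys.A ^ s *ᵥ hankelComb v x 0 := by
    intro s
    induction s with
    | zero => intro _; simp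
    | succ s ih =>
      intro hs
      rw [hankelComb_state hx v (by omega), ih (by omega), hu s (by omega), mulVec_zero, add_zero,
        mulVec_mulVec, ← pow_succ']
  rw [hankelComb_output hx v hr, hu r hr, hstate r hr, mulVec_zero, add_zero, mulVec_mulVec]

/-- Stacking any number `j` of output block rows with `k ≤ j ≤ k + 1` on top of the input Hankel
matrix gives the rank of the state-input matrix; `j = k` is `Gkt` and `j = k + 1` is `Hkt`. -/
theorem rank_outputInput_eq (hobs : Observable sys) (hx : ExplainsWith sys t u y x)
    (hlk : lag sys ≤ k) {j : ℕ} (hkj : k ≤ j) (hjk : j ≤ k + 1) :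
    (fromRows (hankel y j (t - k)) (hankel u (k + 1) (t - k))).rank
      = (stateInputMat x u k (t - k)).rank := by
  refine rank_eq_of_mulVec_eq_zero_iff _ _ fun v => ?_
  rw [stateInputMat_mulVec_eq_zero_iff, stack_mulVec_eq_zero_iff, hankel_mulVec_eq_zero_iff,
    hankel_mulVec_eq_zero_iff]
  refine and_congr_left fun hu => ⟨fun hy => ?_, fun h0 r hr => ?_⟩
  · refine eq_zero_of_lag_le sys hobs hlk _ fun r hr => ?_
    rw [← hankelComb_free_response hx v hu (by omega)]
    exact hy r (by omega)
  · rw [hankelComb_free_response hx v hu (by omega), h0, mulVec_zero]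

end Combination

/-- For an observable system explaining the data with state sequence `x`, and
`ℓ(C,A) ≤ k ≤ t - 1`: `rank H_{k,t}` equals the rank of
`[x_{[0,t-k-1]}; H_k(u_{[0,t-1]})]`, and for `k ≥ 1` so does `rank G_{k,t}`;
in particular `rank G_{k,t} = rank H_{k,t}`. -/
theorem rank_Hkt_eq_stateInput {m p : ℕ} (t k : ℕ) (hkt : k < t)
    (u : ℕ → Fin m → ℝ) (y : ℕ → Fin p → ℝ)
    (sys : LinSys m p) (hobs : Observable sys)
    (x : ℕ → Fin sys.n → ℝ) (hx : ExplainsWith sys t u y x)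
    (hlk : lag sys ≤ k) :
    (Hkt u y k t).rank = (stateInputMat x u k (t - k)).rank ∧
    (1 ≤ k → (Gkt u y k t).rank = (stateInputMat x u k (t - k)).rank) ∧
    (1 ≤ k → (Gkt u y k t).rank = (Hkt u y k t).rank) := by
  have hH := rank_outputInput_eq hobs hx hlk (Nat.le_succ k) le_rfl
  have hG := rank_outputInput_eq hobs hx hlk le_rfl (Nat.le_succ k)
  exact ⟨hH, fun _ => hG, fun _ => hG.trans hH.symm⟩
end
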